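/- Let k be an odd positive integer, k̄ = k+2, and let (v,z,n) satisfy v ∣ k̄, k̄ ∣ v², (v²/k̄) ∣ (4z²−1), and n ∈ {0,1}. Say that a quadruple of integers (a,c,a',c') with a,a' ∈ {0,…,k} satisfies condition P if: a' = J^{(a+c)n} a (where J^m a = a for m even and k−a for m odd), c' ≡ c + (a+c)n (mod 2), and c' ≡ 2cz (mod v²/k̄). Then for any two quadruples (a,c,a',c') and (d,f,d',f') satisfying P, there exist α, α' ∈ {0,…,k} and integers γ, γ' such that (α,γ,α',γ') satisfies P, the fusion number N^{(α, γk̄/v)}_{(a, ck̄/v),(d, fk̄/v)} is nonzero, and the fusion number N^{(α', γ'k̄/v)}_{(a', c'k̄/v),(d', f'k̄/v)} is nonzero. -/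

import Mathlib

/-- Parity `[x] ∈ {0,1}` of an integer. -/
def par (x : ℤ) : ℤ := x % 2

/-- `J^m a`: the m-fold action of the su(2) simple current `J : a ↦ k - a`. -/
def Jpow (k m a : ℤ) : ℤ := if m % 2 = 0 then a else k - a

/-- The su(2) level-`k` fusion number `N^{su2}(l; a, a')`. -/
def Nsu2 (k l a a' : ℤ) : ℤ :=
  if |a - a'| ≤ l ∧ l ≤ min (a + a') (2 * k - a - a') ∧ (a + a' + l) % 2 = 0 then 1 else 0

/-- The fusion number `N^{(α,Γ)}_{(a,C),(d,F)}` of the level-`k` N=2 minimal model. -/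
def Nmin (k α Γ a C d F : ℤ) : ℤ :=
  if par (a + C) * par (d + F) = 0 then
    Nsu2 k α a d * (if C + F ≡ Γ [ZMOD (2 * (k + 2))] then 1 else 0)
  else
    Nsu2 k (k - α) a d * (if C + F ≡ Γ + (k + 2) [ZMOD (2 * (k + 2))] then 1 else 0)

/-- Condition `P` describing the nonzero entries of the odd-level physical
invariant `M⁰[v,z,n]`. -/
def P0 (k v z n a c a' c' : ℤ) : Prop :=
  a' = Jpow k ((a + c) * n) a ∧
  c' ≡ c + (a + c) * n [ZMOD 2] ∧
  c' ≡ 2 * c * z [ZMOD (v ^ 2 / (k + 2))]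

lemma Nsu2_ne (k l a b : ℤ) (h1 : a - b ≤ l) (h2 : b - a ≤ l) (h3 : l ≤ a + b)
    (h4 : l ≤ 2 * k - a - b) (h5 : (a + b + l) % 2 = 0) : Nsu2 k l a b ≠ 0 := by
  unfold Nsu2
  rw [if_pos ⟨abs_le.mpr ⟨by linarith, h1⟩, le_min h3 h4, h5⟩]
  norm_num

lemma par_mul_odd (a c w : ℤ) (hw : w % 2 = 1) : par (a + c * w) = (a + c) % 2 := by
  unfold par
  rw [Int.add_emod, Int.mul_emod, hw]
  omega

lemma Nmin_ne0 (k α a c d f w : ℤ) (hw : w % 2 = 1)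
    (hp : (a + c) % 2 = 0 ∨ (d + f) % 2 = 0) (hN : Nsu2 k α a d ≠ 0) :
    Nmin k α ((c + f) * w) a (c * w) d (f * w) ≠ 0 := by
  unfold Nmin
  rw [par_mul_odd _ _ _ hw, par_mul_odd _ _ _ hw, if_pos (mul_eq_zero.mpr hp), if_pos]
  · simpa using hN
  · rw [add_mul]

lemma Nmin_ne1 (k α a c d f v w : ℤ) (hvw : k + 2 = v * w) (hw : w % 2 = 1)
    (hp : (a + c) % 2 = 1) (hq : (d + f) % 2 = 1) (hN : Nsu2 k (k - α) a d ≠ 0) :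
    Nmin k α ((c + f + v) * w) a (c * w) d (f * w) ≠ 0 := by
  unfold Nmin
  rw [par_mul_odd _ _ _ hw, par_mul_odd _ _ _ hw, hp, hq, if_neg (by norm_num), if_pos]
  · simpa using hN
  · rw [Int.modEq_iff_dvd]
    refine ⟨1, ?_⟩
    rw [hvw]; ring

/-- the fusion of any two fields appearing in the physical invariant
`M⁰[v,z,n]` (`k` odd) contains a field also appearing in `M⁰[v,z,n]`. -/
theorem fusion_consistency_M0 (k v z n : ℤ) (hk : Odd k) (hkpos : 0 < k)
    (hv1 : v ∣ k + 2) (hv2 : (k + 2) ∣ v ^ 2)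
    (hz : (v ^ 2 / (k + 2)) ∣ (4 * z ^ 2 - 1)) (hn : n = 0 ∨ n = 1)
    (a c a' c' d f d' f' : ℤ)
    (ha : 0 ≤ a ∧ a ≤ k) (ha' : 0 ≤ a' ∧ a' ≤ k)
    (hd : 0 ≤ d ∧ d ≤ k) (hd' : 0 ≤ d' ∧ d' ≤ k)
    (hP1 : P0 k v z n a c a' c') (hP2 : P0 k v z n d f d' f') :
    ∃ α γ α' γ' : ℤ,
      (0 ≤ α ∧ α ≤ k) ∧ (0 ≤ α' ∧ α' ≤ k) ∧
      P0 k v z n α γ α' γ' ∧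
      Nmin k α (γ * ((k + 2) / v)) a (c * ((k + 2) / v)) d (f * ((k + 2) / v)) ≠ 0 ∧
      Nmin k α' (γ' * ((k + 2) / v)) a' (c' * ((k + 2) / v)) d' (f' * ((k + 2) / v)) ≠ 0 := by
  obtain ⟨w, hw⟩ := hv1
  obtain ⟨m, hm⟩ := hv2
  have hk2 : k + 2 ≠ 0 := by omega
  have hv0 : v ≠ 0 := by rintro rfl; simp at hw; omega
  have hdw : (k + 2) / v = w := by rw [hw]; exact Int.mul_ediv_cancel_left _ hv0
  have hdm : v ^ 2 / (k + 2) = m := by rw [hm]; exact Int.mul_ediv_cancel_left _ hk2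
  have hvm : v = m * w := by
    apply mul_left_cancel₀ hv0
    rw [hw] at hm; linarith
  have hodd : Odd (v * w) := by rw [← hw]; exact hk.add_even (by decide)
  have hko := Int.odd_iff.mp hk
  have hvo := Int.odd_iff.mp (Int.odd_mul.mp hodd).1
  have hwo := Int.odd_iff.mp (Int.odd_mul.mp hodd).2
  obtain ⟨e1, e2, e3⟩ := hP1
  obtain ⟨g1, g2, g3⟩ := hP2
  rw [hdm] at e3 g3
  rw [hdw]
  have hmv : v ≡ 0 [ZMOD m] := (Int.modEq_zero_iff_dvd).mpr ⟨w, hvm⟩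
  have hs0 : c' + f' ≡ 2 * (c + f) * z [ZMOD m] := by
    have := e3.add g3
    rwa [show 2 * c * z + 2 * f * z = 2 * (c + f) * z by ring] at this
  have hs1 : c' + f' + v ≡ 2 * (c + f + v) * z [ZMOD m] := by
    have h := hs0.add (hmv.trans (by simpa using (hmv.mul_left (2 * z)).symm))
    rwa [show 2 * (c + f) * z + 2 * z * v = 2 * (c + f + v) * z by ring] at h
  clear e3 g3 hz
  have key0 : ((a + c) % 2 = 0 ∨ (d + f) % 2 = 0) → ((a' + c') % 2 = 0 ∨ (d' + f') % 2 = 0) →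
      ∀ α α' : ℤ, (0 ≤ α ∧ α ≤ k) → (0 ≤ α' ∧ α' ≤ k) → α' = Jpow k ((α + (c + f)) * n) α →
      c' + f' ≡ (c + f) + (α + (c + f)) * n [ZMOD 2] → Nsu2 k α a d ≠ 0 →
      Nsu2 k α' a' d' ≠ 0 → ∃ α γ α' γ' : ℤ,
      (0 ≤ α ∧ α ≤ k) ∧ (0 ≤ α' ∧ α' ≤ k) ∧
      P0 k v z n α γ α' γ' ∧
      Nmin k α (γ * w) a (c * w) d (f * w) ≠ 0 ∧
      Nmin k α' (γ' * w) a' (c' * w) d' (f' * w) ≠ 0 := by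
    intro hp hp' α α' h1 h2 h3 h4 h5 h6
    refine ⟨α, c + f, α', c' + f', h1, h2, ⟨h3, h4, ?_⟩, Nmin_ne0 _ _ _ _ _ _ _ hwo hp h5,
      Nmin_ne0 _ _ _ _ _ _ _ hwo hp' h6⟩
    rw [hdm]; exact hs0
  have key1 : (a + c) % 2 = 1 → (d + f) % 2 = 1 → (a' + c') % 2 = 1 → (d' + f') % 2 = 1 →
      ∀ α α' : ℤ, (0 ≤ α ∧ α ≤ k) → (0 ≤ α' ∧ α' ≤ k) →
      α' = Jpow k ((α + (c + f + v)) * n) α →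
      c' + f' + v ≡ (c + f + v) + (α + (c + f + v)) * n [ZMOD 2] → Nsu2 k (k - α) a d ≠ 0 →
      Nsu2 k (k - α') a' d' ≠ 0 → ∃ α γ α' γ' : ℤ,
      (0 ≤ α ∧ α ≤ k) ∧ (0 ≤ α' ∧ α' ≤ k) ∧
      P0 k v z n α γ α' γ' ∧
      Nmin k α (γ * w) a (c * w) d (f * w) ≠ 0 ∧
      Nmin k α' (γ' * w) a' (c' * w) d' (f' * w) ≠ 0 := by
    intro hp hq hp' hq' α α' h1 h2 h3 h4 h5 h6
    refine ⟨α, c + f + v, α', c' + f' + v, h1, h2, ⟨h3, h4, ?_⟩,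
      Nmin_ne1 _ _ _ _ _ _ _ _ hw hwo hp hq h5, Nmin_ne1 _ _ _ _ _ _ _ _ hw hwo hp' hq' h6⟩
    rw [hdm]; exact hs1
  clear hs0 hs1 hmv hdm hdw
  obtain ⟨t, ht1, ht2, ht3, ht4, ht5, ht6⟩ : ∃ t : ℤ, a - d ≤ t ∧ d - a ≤ t ∧ t ≤ a + d ∧
      t ≤ 2 * k - a - d ∧ (a + d + t) % 2 = 0 ∧ (t = a - d ∨ t = d - a) := by
    rcases le_total a d with h | h
    · exact ⟨d - a, by omega, by omega, by omega, by omega, by omega, by omega⟩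
    · exact ⟨a - d, by omega, by omega, by omega, by omega, by omega, by omega⟩
  have hN := Nsu2_ne k t a d ht1 ht2 ht3 ht4 ht5
  clear hw hm hvm hodd
  unfold Int.ModEq at *
  unfold Jpow at *
  rcases hn with rfl | rfl
  · simp only [mul_zero, add_zero, Int.zero_emod, if_true] at *
    subst e1 g1
    by_cases hpq : (a' + c) % 2 = 0 ∨ (d' + f) % 2 = 0
    · exact key0 hpq (by omega) t t (by omega) (by omega) rfl (by omega) hN hN
    · refine key1 (by omega) (by omega) (by omega) (by omega) (k - t) (k - t) (by omega)
        (by omega) rfl (by omega) ?_ ?_ <;> simpa using hN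
  · simp only [mul_one] at *
    rcases Int.emod_two_eq_zero_or_one (a + c) with hp | hp <;>
    rcases Int.emod_two_eq_zero_or_one (d + f) with hq | hq <;>
    simp only [hp, hq, if_true, one_ne_zero, if_false] at e1 g1
    · refine key0 (by omega) (by omega) t t (by omega) (by omega) ?_ (by omega) hN
        (Nsu2_ne _ _ _ _ ?_ ?_ ?_ ?_ ?_) <;> first | omega | (rw [if_pos (by omega)])
    · refine key0 (by omega) (by omega) t (k - t) (by omega) (by omega) ?_ (by omega) hN
        (Nsu2_ne _ _ _ _ ?_ ?_ ?_ ?_ ?_) <;> first | omega | (rw [if_neg (by omega)])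
    · refine key0 (by omega) (by omega) t (k - t) (by omega) (by omega) ?_ (by omega) hN
        (Nsu2_ne _ _ _ _ ?_ ?_ ?_ ?_ ?_) <;> first | omega | (rw [if_neg (by omega)])
    · refine key1 (by omega) (by omega) (by omega) (by omega) (k - t) (k - t) (by omega)
        (by omega) ?_ (by omega) (by simpa using hN)
        (Nsu2_ne _ _ _ _ ?_ ?_ ?_ ?_ ?_) <;> first | omega | (rw [if_pos (by omega)])
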